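/- (Proposition 5) The map on generators sending η_k ↦ η_{k+1} and ε_k ↦ ε_{k+1} induces a well-defined monoid homomorphism f : F₀ →* F₀ (i.e. the shift endomorphism of F descends through the congruence generated by R₀), and in F₀, with η := π(η_0) and ε := π(ε_0), the identities hold: ε * η = 1; ε * f(η) = 1; ε * f(ε) = ε * ε; ε * f(f(x)) = f(x) * ε for all x ∈ F₀; and f(x) * η = η * x for all x ∈ F₀. -/

import Mathlib

/-- The free monoid on the generators `η_k` and `ε_k` (`k ∈ ℕ`). -/
abbrev FreeAdj := FreeMonoid (Bool × ℕ)

/-- The generator `η_k`. -/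
def ηgen (k : ℕ) : FreeAdj := FreeMonoid.of (true, k)

/-- The generator `ε_k`. -/
def εgen (k : ℕ) : FreeAdj := FreeMonoid.of (false, k)

/-- The set of relation pairs `R₀`. -/
inductive R0 : FreeAdj → FreeAdj → Prop
  | ee {i j : ℕ} (h : i < j) : R0 (εgen i * εgen j) (εgen (j - 1) * εgen i)
  | hh {i j : ℕ} (h : i < j) : R0 (ηgen j * ηgen i) (ηgen i * ηgen (j - 1))
  | eh_gt {i j : ℕ} (h : i + 1 < j) : R0 (εgen i * ηgen j) (ηgen (j - 1) * εgen i)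
  | eh_lt {i j : ℕ} (h : j < i) : R0 (εgen i * ηgen j) (ηgen j * εgen (i - 1))
  | eh_eq {i : ℕ} (h : 0 < i) : R0 (εgen i * ηgen i) (εgen (i - 1) * ηgen i)
  | eh_succ (i : ℕ) : R0 (εgen i * ηgen (i + 1)) (εgen i * ηgen i)
  | eh_zero : R0 (εgen 0 * ηgen 0) 1

/-- The monoid `F₀`: the quotient of the free monoid by the congruence
generated by `R₀`. -/
abbrev F0 := (conGen R0).Quotient

/-- The quotient map `π : F →* F₀`. -/
def πmap : FreeAdj →* F0 := (conGen R0).mk'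

/-! The three families of relations rewriting `ε_i * η_i` and `ε_i * η_{i+1}` together say exactly
that all these products equal `1`. In this form no relation singles out the index `0`, so the system
is stable under `k ↦ k + 1`, which yields the shift endomorphism. The last two identities assert
that a fixed element semiconjugates one endomorphism into another; such a statement need only be
tested on generators, where it is one of the relations. -/

theorem semiconjBy_of_closure_eq_top {N M : Type*} [Monoid N] [Monoid M] {s : Set N}
    (hs : Submonoid.closure s = ⊤) {f g : N →* M} {c : M}
    (h : ∀ x ∈ s, SemiconjBy c (f x) (g x)) (x : N) : SemiconjBy c (f x) (g x) := by
  induction x using Submonoid.dense_induction s hs with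
  | mem x hx => exact h x hx
  | one => simp
  | mul x y hx hy => simpa only [map_mul] using hx.mul_right hy

/-- The relations `R₀` for a pair of sequences `η`, `ε` in a monoid, written without truncated
subtraction and with the relations on `ε_i * η_i` and `ε_i * η_{i+1}` solved: all these products
are `1`. -/
structure AdjRelations {M : Type*} [Monoid M] (η ε : ℕ → M) : Prop where
  ε_mul_ε {i j : ℕ} (h : i ≤ j) : ε i * ε (j + 1) = ε j * ε i
  η_mul_η {i j : ℕ} (h : i ≤ j) : η (j + 1) * η i = η i * η j
  ε_mul_η_of_lt {i j : ℕ} (h : i < j) : ε i * η (j + 1) = η j * ε i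
  ε_mul_η_of_le {i j : ℕ} (h : j ≤ i) : ε (i + 1) * η j = η j * ε i
  ε_mul_η_self (i : ℕ) : ε i * η i = 1
  ε_mul_η_succ (i : ℕ) : ε i * η (i + 1) = 1

/-- The homomorphism from the free monoid sending `η_k` to `η k` and `ε_k` to `ε k`. -/
def FreeAdj.lift {M : Type*} [Monoid M] (η ε : ℕ → M) : FreeAdj →* M :=
  FreeMonoid.lift fun
    | (true, k) => η k
    | (false, k) => ε k

namespace AdjRelations

variable {M : Type*} [Monoid M] {η ε : ℕ → M}

theorem shift (h : AdjRelations η ε) :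
    AdjRelations (fun k ↦ η (k + 1)) (fun k ↦ ε (k + 1)) where
  ε_mul_ε hij := h.ε_mul_ε (Nat.succ_le_succ hij)
  η_mul_η hij := h.η_mul_η (Nat.succ_le_succ hij)
  ε_mul_η_of_lt hij := h.ε_mul_η_of_lt (Nat.succ_lt_succ hij)
  ε_mul_η_of_le hij := h.ε_mul_η_of_le (Nat.succ_le_succ hij)
  ε_mul_η_self i := h.ε_mul_η_self (i + 1)
  ε_mul_η_succ i := h.ε_mul_η_succ (i + 1)

theorem lift_eq_lift_of_R0 (h : AdjRelations η ε) {a b : FreeAdj} (hab : R0 a b) :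
    FreeAdj.lift η ε a = FreeAdj.lift η ε b := by
  have lift_η (k : ℕ) : FreeAdj.lift η ε (ηgen k) = η k := rfl
  have lift_ε (k : ℕ) : FreeAdj.lift η ε (εgen k) = ε k := rfl
  cases hab <;> simp only [map_mul, map_one, lift_η, lift_ε]
  case ee i j hij =>
    obtain ⟨j, rfl⟩ := Nat.exists_eq_succ_of_ne_zero hij.ne_bot
    exact h.ε_mul_ε (Nat.le_of_lt_succ hij)
  case hh i j hij =>
    obtain ⟨j, rfl⟩ := Nat.exists_eq_succ_of_ne_zero hij.ne_bot
    exact h.η_mul_η (Nat.le_of_lt_succ hij)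
  case eh_gt i j hij =>
    obtain ⟨j, rfl⟩ := Nat.exists_eq_succ_of_ne_zero hij.ne_bot
    exact h.ε_mul_η_of_lt (Nat.lt_of_succ_lt_succ hij)
  case eh_lt i j hij =>
    obtain ⟨i, rfl⟩ := Nat.exists_eq_succ_of_ne_zero hij.ne_bot
    exact h.ε_mul_η_of_le (Nat.le_of_lt_succ hij)
  case eh_eq i hi =>
    obtain ⟨i, rfl⟩ := Nat.exists_eq_succ_of_ne_zero hi.ne'
    exact (h.ε_mul_η_self (i + 1)).trans (h.ε_mul_η_succ i).symm
  case eh_succ i => exact (h.ε_mul_η_succ i).trans (h.ε_mul_η_self i).symm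
  case eh_zero => exact h.ε_mul_η_self 0

end AdjRelations

namespace F0

theorem adjRelations : AdjRelations (fun k ↦ πmap (ηgen k)) (fun k ↦ πmap (εgen k)) := by
  have rel {a b : FreeAdj} (h : R0 a b) : πmap a = πmap b := PresentedMonoid.mk_eq_mk_of_rel h
  have ε_mul_η_succ_eq (i : ℕ) :
      πmap (εgen i) * πmap (ηgen (i + 1)) = πmap (εgen i) * πmap (ηgen i) := rel (R0.eh_succ i)
  have ε_mul_η_self (i : ℕ) : πmap (εgen i) * πmap (ηgen i) = 1 := by
    induction i with
    | zero => exact rel R0.eh_zero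
    | succ i ih =>
      calc πmap (εgen (i + 1)) * πmap (ηgen (i + 1))
        _ = πmap (εgen i) * πmap (ηgen (i + 1)) := rel (R0.eh_eq i.succ_pos)
        _ = πmap (εgen i) * πmap (ηgen i) := ε_mul_η_succ_eq i
        _ = 1 := ih
  exact {
    ε_mul_ε h := rel (R0.ee (Nat.lt_succ_of_le h))
    η_mul_η h := rel (R0.hh (Nat.lt_succ_of_le h))
    ε_mul_η_of_lt h := rel (R0.eh_gt (Nat.succ_lt_succ h))
    ε_mul_η_of_le h := rel (R0.eh_lt (Nat.lt_succ_of_le h))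
    ε_mul_η_self
    ε_mul_η_succ i := (ε_mul_η_succ_eq i).trans (ε_mul_η_self i) }

theorem semiconjBy_of_generators {M : Type*} [Monoid M] {f g : F0 →* M} {c : M}
    (hη : ∀ k, SemiconjBy c (f (πmap (ηgen k))) (g (πmap (ηgen k))))
    (hε : ∀ k, SemiconjBy c (f (πmap (εgen k))) (g (πmap (εgen k)))) (x : F0) :
    SemiconjBy c (f x) (g x) := by
  -- `F0` and `PresentedMonoid R0` are definitionally equal.
  refine semiconjBy_of_closure_eq_top (PresentedMonoid.closure_range_of R0) ?_ x
  rintro _ ⟨⟨_ | _, k⟩, rfl⟩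
  exacts [hε k, hη k]

/-- The universal property of `F₀`: sequences satisfying the relations extend to a homomorphism. -/
def lift {M : Type*} [Monoid M] {η ε : ℕ → M} (h : AdjRelations η ε) : F0 →* M :=
  (conGen R0).lift (FreeAdj.lift η ε) (Con.conGen_le.2 fun _ _ ↦ h.lift_eq_lift_of_R0)

/-- The endomorphism `f` of `F₀` with `η_k ↦ η_{k+1}` and `ε_k ↦ ε_{k+1}`. -/
def shift : F0 →* F0 := lift adjRelations.shift

theorem shift_η (k : ℕ) : shift (πmap (ηgen k)) = πmap (ηgen (k + 1)) := rfl

theorem shift_ε (k : ℕ) : shift (πmap (εgen k)) = πmap (εgen (k + 1)) := rfl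

theorem semiconjBy_ε_shift_shift (x : F0) :
    SemiconjBy (πmap (εgen 0)) (shift (shift x)) (shift x) :=
  semiconjBy_of_generators (f := shift.comp shift) (g := shift)
    (fun k ↦ adjRelations.ε_mul_η_of_lt k.succ_pos)
    (fun k ↦ adjRelations.ε_mul_ε (k + 1).zero_le) x

theorem semiconjBy_η_shift (x : F0) : SemiconjBy (πmap (ηgen 0)) x (shift x) :=
  semiconjBy_of_generators (f := MonoidHom.id F0) (g := shift)
    (fun k ↦ (adjRelations.η_mul_η k.zero_le).symm)
    (fun k ↦ (adjRelations.ε_mul_η_of_le k.zero_le).symm) x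

end F0

theorem shift_endomorphism_and_identities :
    ∃ f : F0 →* F0,
      (∀ k : ℕ, f (πmap (ηgen k)) = πmap (ηgen (k + 1))) ∧
      (∀ k : ℕ, f (πmap (εgen k)) = πmap (εgen (k + 1))) ∧
      πmap (εgen 0) * πmap (ηgen 0) = 1 ∧
      πmap (εgen 0) * f (πmap (ηgen 0)) = 1 ∧
      πmap (εgen 0) * f (πmap (εgen 0)) = πmap (εgen 0) * πmap (εgen 0) ∧
      (∀ x : F0, πmap (εgen 0) * f (f x) = f x * πmap (εgen 0)) ∧
      (∀ x : F0, f x * πmap (ηgen 0) = πmap (ηgen 0) * x) := by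
  exact ⟨F0.shift, F0.shift_η, F0.shift_ε, F0.adjRelations.ε_mul_η_self 0,
    F0.adjRelations.ε_mul_η_succ 0, F0.adjRelations.ε_mul_ε le_rfl,
    fun x ↦ (F0.semiconjBy_ε_shift_shift x).eq, fun x ↦ (F0.semiconjBy_η_shift x).eq.symm⟩
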